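/- Let l_1,…,l_n and r_1,…,r_n be d-dimensional bit vectors and let ℓ ≥ 1, p ∈ {0,1}, q ≥ 0 be integers, and let G = G_{L,R,ℓ,p,q}. For every 1 ≤ i ≤ n and every 1 ≤ k ≤ d, dist_G(u_i^L, w_k^L) ≥ 2ℓ − p and dist_G(u_i^R, w_k^R) ≥ 2ℓ − p. -/

import Mathlib

namespace GraphOV

/-- Two bit vectors (functions into `Fin 2`) are orthogonal if in every coordinate
at least one of them is `0`. -/
def Orth {d : ℕ} (a b : Fin d → Fin 2) : Prop := ∀ k, a k = 0 ∨ b k = 0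

/-- A system of internally disjoint paths joining exterior vertices from `E`:
for each path name `i : ι` we record its two endpoints and its length. -/
structure PathSys (E : Type) (ι : Type) where
  src : ι → E
  dst : ι → E
  len : ι → ℕ

namespace PathSys

variable {E ι : Type}

/-- Endpoints of zero-length paths get identified. -/
def idRel (S : PathSys E ι) (a b : E) : Prop :=
  ∃ i, S.len i = 0 ∧ S.src i = a ∧ S.dst i = b

/-- Vertices of the glued graph: exterior vertices (up to identification) together
with, for each path of length `m`, fresh interior vertices at positions `1,…,m-1`. -/
def Vert (S : PathSys E ι) : Type :=
  Quot S.idRel ⊕ Σ i : ι, {t : ℕ // 0 < t ∧ t < S.len i}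

/-- The vertex corresponding to an exterior vertex. -/
def ext (S : PathSys E ι) (a : E) : S.Vert := Sum.inl (Quot.mk _ a)

/-- The `t`-th vertex on the path named `i` (for `0 ≤ t ≤ S.len i`). -/
def pt (S : PathSys E ι) (i : ι) (t : ℕ) : S.Vert :=
  if h : 0 < t ∧ t < S.len i then Sum.inr ⟨i, t, h⟩
  else if t = 0 then S.ext (S.src i) else S.ext (S.dst i)

/-- The glued graph: consecutive vertices on each path are adjacent. -/
def graph (S : PathSys E ι) : SimpleGraph S.Vert :=
  SimpleGraph.fromRel fun a b =>
    ∃ i t, t + 1 ≤ S.len i ∧ a = S.pt i t ∧ b = S.pt i (t + 1)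

/-- The set of vertices lying on the path named `i`. -/
def onPath (S : PathSys E ι) (i : ι) : Set S.Vert :=
  {v | ∃ t ≤ S.len i, v = S.pt i t}

/-- A walk in the glued graph contains the path named `i` entirely if all vertices of
that path occur consecutively (in forward or backward order) on the walk. -/
def WalkContainsPath (S : PathSys E ι) {x y : S.Vert} (W : S.graph.Walk x y) (i : ι) : Prop :=
  ∃ a, a + S.len i ≤ W.length ∧
    ((∀ t ≤ S.len i, W.getVert (a + t) = S.pt i t) ∨
     (∀ t ≤ S.len i, W.getVert (a + t) = S.pt i (S.len i - t)))

end PathSys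

/-- The exterior vertices of the graph `G_{L,R,ℓ,p,q}`. -/
inductive Ext (n d : ℕ) : Type
  | uL : Fin n → Ext n d
  | uR : Fin n → Ext n d
  | vL : Fin n → Ext n d
  | vR : Fin n → Ext n d
  | wL : Fin d → Ext n d
  | wR : Fin d → Ext n d
  | xL : Ext n d
  | xR : Ext n d
  | yL : Ext n d
  | yR : Ext n d

/-- Names for the paths of the graph `G_{L,R,ℓ,p,q}`. -/
inductive Idx (n d : ℕ) (l r : Fin n → Fin d → Fin 2) : Type
  | uvL : Fin n → Idx n d l r
  | uvR : Fin n → Idx n d l r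
  | vxL : Fin n → Idx n d l r
  | vxR : Fin n → Idx n d l r
  | vwL : (i : Fin n) → (k : Fin d) → l i k = 1 → Idx n d l r
  | vwR : (j : Fin n) → (k : Fin d) → r j k = 1 → Idx n d l r
  | ywL : Fin d → Idx n d l r
  | ywR : Fin d → Idx n d l r
  | ww : Fin d → Idx n d l r
  | xyL : Idx n d l r
  | xyR : Idx n d l r
  | yy : Idx n d l r

/-- The path system defining the graph `G_{L,R,ℓ,p,q}`. -/
def sys (n d : ℕ) (l r : Fin n → Fin d → Fin 2) (ℓ p q : ℕ) :
    PathSys (Ext n d) (Idx n d l r) where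
  src := fun i => match i with
    | .uvL i => .uL i
    | .uvR i => .uR i
    | .vxL i => .vL i
    | .vxR i => .vR i
    | .vwL i _ _ => .vL i
    | .vwR j _ _ => .vR j
    | .ywL _ => .yL
    | .ywR _ => .yR
    | .ww k => .wL k
    | .xyL => .xL
    | .xyR => .xR
    | .yy => .yL
  dst := fun i => match i with
    | .uvL i => .vL i
    | .uvR i => .vR i
    | .vxL _ => .xL
    | .vxR _ => .xR
    | .vwL _ k _ => .wL k
    | .vwR _ k _ => .wR k
    | .ywL k => .wL k
    | .ywR k => .wR k
    | .ww k => .wR k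
    | .xyL => .yL
    | .xyR => .yR
    | .yy => .yR
  len := fun i => match i with
    | .uvL _ => ℓ - p
    | .uvR _ => ℓ - p
    | .vxL _ => ℓ
    | .vxR _ => ℓ
    | .vwL _ _ _ => ℓ
    | .vwR _ _ _ => ℓ
    | .ywL _ => ℓ
    | .ywR _ => ℓ
    | .ww _ => q
    | .xyL => ℓ - p
    | .xyR => ℓ - p
    | .yy => p + q

/-- The set `P_i^L`. -/
def PL (n d : ℕ) (l r : Fin n → Fin d → Fin 2) (ℓ p q : ℕ) (i : Fin n) :
    Set (sys n d l r ℓ p q).Vert :=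
  (sys n d l r ℓ p q).onPath (.uvL i) ∪
    ((sys n d l r ℓ p q).onPath (.vxL i) \ {(sys n d l r ℓ p q).ext .xL}) ∪
    ⋃ (k : Fin d) (h : l i k = 1),
      ((sys n d l r ℓ p q).onPath (.vwL i k h) \ {(sys n d l r ℓ p q).ext (.wL k)})

/-- The set `P_j^R`. -/
def PR (n d : ℕ) (l r : Fin n → Fin d → Fin 2) (ℓ p q : ℕ) (j : Fin n) :
    Set (sys n d l r ℓ p q).Vert :=
  (sys n d l r ℓ p q).onPath (.uvR j) ∪
    ((sys n d l r ℓ p q).onPath (.vxR j) \ {(sys n d l r ℓ p q).ext .xR}) ∪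
    ⋃ (k : Fin d) (h : r j k = 1),
      ((sys n d l r ℓ p q).onPath (.vwR j k h) \ {(sys n d l r ℓ p q).ext (.wR k)})

/-- The set `V^L`. -/
def VL (n d : ℕ) (l r : Fin n → Fin d → Fin 2) (ℓ p q : ℕ) :
    Set (sys n d l r ℓ p q).Vert := ⋃ i : Fin n, PL n d l r ℓ p q i

/-- The set `V^R`. -/
def VR (n d : ℕ) (l r : Fin n → Fin d → Fin 2) (ℓ p q : ℕ) :
    Set (sys n d l r ℓ p q).Vert := ⋃ j : Fin n, PR n d l r ℓ p q j

/-- The set `V^M` of all remaining vertices. -/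
def VM (n d : ℕ) (l r : Fin n → Fin d → Fin 2) (ℓ p q : ℕ) :
    Set (sys n d l r ℓ p q).Vert := (VL n d l r ℓ p q ∪ VR n d l r ℓ p q)ᶜ

namespace PathSys

variable {E ι : Type}

theorem pt_zero (S : PathSys E ι) (i : ι) : S.pt i 0 = S.ext (S.src i) := by
  simp [pt]

theorem pt_len (S : PathSys E ι) (i : ι) : S.pt i (S.len i) = S.ext (S.dst i) := by
  by_cases h : S.len i = 0
  · rw [h, pt_zero]
    exact congrArg Sum.inl (Quot.sound ⟨i, h, rfl, rfl⟩)
  · simp [pt, h]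

theorem reach_pt (S : PathSys E ι) (i : ι) (t : ℕ) (ht : t ≤ S.len i) :
    S.graph.Reachable (S.pt i 0) (S.pt i t) := by
  induction t with
  | zero => exact SimpleGraph.Reachable.refl _
  | succ t ih =>
    refine (ih (by omega)).trans ?_
    by_cases h : S.pt i t = S.pt i (t + 1)
    · rw [h]
    · refine SimpleGraph.Adj.reachable ?_
      rw [graph, SimpleGraph.fromRel_adj]
      exact ⟨h, Or.inl ⟨i, t, ht, rfl, rfl⟩⟩

theorem reach (S : PathSys E ι) (i : ι) :
    S.graph.Reachable (S.ext (S.src i)) (S.ext (S.dst i)) := by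
  rw [← pt_zero, ← pt_len]
  exact S.reach_pt i _ le_rfl

/-- A potential on exterior vertices extended to the whole graph. -/
def pot (S : PathSys E ι) (F : E → ℕ)
    (h : ∀ i, F (S.dst i) ≤ F (S.src i) + S.len i ∧ F (S.src i) ≤ F (S.dst i) + S.len i) :
    S.Vert → ℕ :=
  Sum.elim
    (Quot.lift F (by
      rintro a b ⟨i, hi, rfl, rfl⟩
      have := h i
      omega))
    (fun x => min (F (S.src x.1) + x.2.1) (F (S.dst x.1) + (S.len x.1 - x.2.1)))

theorem pot_ext (S : PathSys E ι) (F : E → ℕ) (h) (a : E) : S.pot F h (S.ext a) = F a := rfl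

theorem pot_pt (S : PathSys E ι) (F : E → ℕ) (h) (i : ι) (t : ℕ) (ht : t ≤ S.len i) :
    S.pot F h (S.pt i t) = min (F (S.src i) + t) (F (S.dst i) + (S.len i - t)) := by
  have hi := h i
  by_cases h1 : 0 < t ∧ t < S.len i
  · have e : S.pt i t = (Sum.inr ⟨i, t, h1⟩ : Quot S.idRel ⊕ Σ i : ι, {t : ℕ // 0 < t ∧ t < S.len i}) :=
      dif_pos h1
    exact congrArg (S.pot F h) e
  · by_cases h0 : t = 0
    · subst h0; rw [pt_zero, pot_ext]; omega
    · have : t = S.len i := by omega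
      subst this
      rw [pt_len, pot_ext]; omega

theorem le_dist (S : PathSys E ι) (F : E → ℕ)
    (h : ∀ i, F (S.dst i) ≤ F (S.src i) + S.len i ∧ F (S.src i) ≤ F (S.dst i) + S.len i)
    (a b : E) (hr : S.graph.Reachable (S.ext a) (S.ext b)) :
    F b ≤ F a + S.graph.dist (S.ext a) (S.ext b) := by
  have key : ∀ {x y : S.Vert} (W : S.graph.Walk x y),
      S.pot F h y ≤ S.pot F h x + W.length := by
    intro x y W
    induction W with
    | nil => simp
    | cons hadj W ih =>
      rw [SimpleGraph.Walk.length_cons]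
      rw [graph, SimpleGraph.fromRel_adj] at hadj
      rcases hadj with ⟨-, ⟨i, t, ht, rfl, rfl⟩ | ⟨i, t, ht, rfl, rfl⟩⟩ <;>
      · rw [pot_pt _ _ _ _ _ ht] at *
        rw [pot_pt _ _ _ _ _ (by omega)] at *
        omega
  obtain ⟨W, hW⟩ := hr.exists_walk_length_eq_dist
  have := key W
  rw [pot_ext, pot_ext, hW] at this
  exact this

end PathSys

theorem dist_u_to_w (n d ℓ p q : ℕ) (hn : 1 ≤ n) (hd : 1 ≤ d) (hℓ : 1 ≤ ℓ)
    (hp : p ≤ 1) (l r : Fin n → Fin d → Fin 2) :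
    ∀ (i : Fin n) (k : Fin d),
      2 * ℓ - p ≤ (sys n d l r ℓ p q).graph.dist ((sys n d l r ℓ p q).ext (.uL i))
        ((sys n d l r ℓ p q).ext (.wL k)) ∧
      2 * ℓ - p ≤ (sys n d l r ℓ p q).graph.dist ((sys n d l r ℓ p q).ext (.uR i))
        ((sys n d l r ℓ p q).ext (.wR k)) := by
  intro i k
  constructor
  · have hr : (sys n d l r ℓ p q).graph.Reachable ((sys n d l r ℓ p q).ext (.uL i))
        ((sys n d l r ℓ p q).ext (.wL k)) :=
      ((((sys n d l r ℓ p q).reach (.uvL i)).trans ((sys n d l r ℓ p q).reach (.vxL i))).trans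
        ((sys n d l r ℓ p q).reach .xyL)).trans ((sys n d l r ℓ p q).reach (.ywL k))
    have := (sys n d l r ℓ p q).le_dist
      (fun e => match e with
        | .uL j => if j = i then 0 else 2 * ℓ - p
        | .vL j => if j = i then ℓ - p else 2 * ℓ - p
        | _ => 2 * ℓ - p)
      (by
        intro a
        cases a <;> simp only [sys] <;> (try split_ifs) <;> omega) _ _ hr
    simpa using this
  · have hr : (sys n d l r ℓ p q).graph.Reachable ((sys n d l r ℓ p q).ext (.uR i))
        ((sys n d l r ℓ p q).ext (.wR k)) :=
      ((((sys n d l r ℓ p q).reach (.uvR i)).trans ((sys n d l r ℓ p q).reach (.vxR i))).trans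
        ((sys n d l r ℓ p q).reach .xyR)).trans ((sys n d l r ℓ p q).reach (.ywR k))
    have := (sys n d l r ℓ p q).le_dist
      (fun e => match e with
        | .uR j => if j = i then 0 else 2 * ℓ - p
        | .vR j => if j = i then ℓ - p else 2 * ℓ - p
        | _ => 2 * ℓ - p)
      (by
        intro a
        cases a <;> simp only [sys] <;> (try split_ifs) <;> omega) _ _ hr
    simpa using this

end GraphOV
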